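/- The rewrite relation of the name algebra is confluent: for all terms a, b, c, if a →* b and a →* c, then there exists a term d such that b →* d and c →* d. -/

import Mathlib

/-- Terms of the name algebra over atoms in ℕ. -/
inductive Term : Type
  | var : ℕ → Term
  | projL : Term → Term
  | projR : Term → Term
  | join : Term → Term → Term
deriving DecidableEq

/-- One-step rewrite relation: the three rules `(u ∧ v).l → u`, `(u ∧ v).r → v`,
`(u.l ∧ u.r) → u`, closed under all term contexts. -/
inductive Step : Term → Term → Prop
  | splitL (u v : Term) : Step (Term.projL (Term.join u v)) u
  | splitR (u v : Term) : Step (Term.projR (Term.join u v)) v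
  | merge (u : Term) : Step (Term.join (Term.projL u) (Term.projR u)) u
  | congL {a b : Term} : Step a b → Step (Term.projL a) (Term.projL b)
  | congR {a b : Term} : Step a b → Step (Term.projR a) (Term.projR b)
  | congJoinL {a b : Term} (v : Term) : Step a b → Step (Term.join a v) (Term.join b v)
  | congJoinR {a b : Term} (u : Term) : Step a b → Step (Term.join u a) (Term.join u b)

/-- Reflexive-transitive closure of `Step`. -/
def Steps : Term → Term → Prop := Relation.ReflTransGen Step

/-- A term is in normal form if no rewrite step applies to it. -/
def NormalForm (n : Term) : Prop := ¬ ∃ m, Step n m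

/-- `u ≈ v` : the normal forms of `u` and `v` coincide, i.e. they reach a common normal form. -/
def TermEquiv (u v : Term) : Prop := ∃ n, NormalForm n ∧ Steps u n ∧ Steps v n

namespace NA
def pl : Term → Term
  | .join u _ => u
  | t => .projL t
def pr : Term → Term
  | .join _ v => v
  | t => .projR t
def mj : Term → Term → Term
  | .projL u, .projR v => if u = v then u else .join (.projL u) (.projR v)
  | a, b => .join a b
def nf : Term → Term
  | .var n => .var n
  | .projL t => pl (nf t)
  | .projR t => pr (nf t)
  | .join a b => mj (nf a) (nf b)
def Good : Term → Prop
  | .var _ => True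
  | .projL t => Good t ∧ pl t = .projL t
  | .projR t => Good t ∧ pr t = .projR t
  | .join a b => Good a ∧ Good b ∧ mj a b = .join a b

theorem pl_good {t : Term} (h : Good t) : Good (pl t) := by
  cases t <;> simp_all [pl, Good]
theorem pr_good {t : Term} (h : Good t) : Good (pr t) := by
  cases t <;> simp_all [pr, Good]
theorem mj_cases (a b : Term) :
    (∃ u, a = .projL u ∧ b = .projR u ∧ mj a b = u) ∨ mj a b = .join a b := by
  unfold mj
  split
  · split_ifs with h
    · subst h; exact Or.inl ⟨_, rfl, rfl, rfl⟩
    · exact Or.inr rfl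
  · exact Or.inr rfl
theorem mj_good {a b : Term} (ha : Good a) (hb : Good b) : Good (mj a b) := by
  rcases mj_cases a b with ⟨u, rfl, rfl, h⟩ | h
  · rw [h]; exact ha.1
  · rw [h]; exact ⟨ha, hb, h⟩
theorem nf_good (t : Term) : Good (nf t) := by
  induction t with
  | var n => trivial
  | projL t ih => exact pl_good ih
  | projR t ih => exact pr_good ih
  | join a b iha ihb => exact mj_good iha ihb
theorem pl_mj {a b : Term} (ha : Good a) : pl (mj a b) = a := by
  rcases mj_cases a b with ⟨u, rfl, rfl, h⟩ | h
  · rw [h]; exact ha.2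
  · rw [h]; rfl
theorem pr_mj {a b : Term} (hb : Good b) : pr (mj a b) = b := by
  rcases mj_cases a b with ⟨u, rfl, rfl, h⟩ | h
  · rw [h]; exact hb.2
  · rw [h]; rfl
theorem mj_pl_pr {t : Term} (h : Good t) : mj (pl t) (pr t) = t := by
  cases t with
  | join a b => exact h.2.2
  | _ => simp [pl, pr, mj]
theorem nf_step {a b : Term} (h : Step a b) : nf a = nf b := by
  induction h with
  | splitL u v => exact pl_mj (nf_good u)
  | splitR u v => exact pr_mj (nf_good v)
  | merge u => exact mj_pl_pr (nf_good u)
  | _ => simp_all [nf]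
theorem nf_steps {a b : Term} (h : Steps a b) : nf a = nf b := by
  unfold Steps at h
  induction h with
  | refl => rfl
  | tail _ h ih => exact ih.trans (nf_step h)
theorem pl_steps (t : Term) : Steps (.projL t) (pl t) := by
  cases t with
  | join a b => exact .single (.splitL a b)
  | _ => exact .refl
theorem pr_steps (t : Term) : Steps (.projR t) (pr t) := by
  cases t with
  | join a b => exact .single (.splitR a b)
  | _ => exact .refl
theorem mj_steps (a b : Term) : Steps (.join a b) (mj a b) := by
  rcases mj_cases a b with ⟨u, rfl, rfl, h⟩ | h
  · rw [h]; exact .single (.merge u)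
  · rw [h]; exact .refl
theorem lift (f : Term → Term) (hf : ∀ x y, Step x y → Step (f x) (f y)) {a b : Term}
    (h : Steps a b) : Steps (f a) (f b) := by
  unfold Steps at h
  induction h with
  | refl => exact .refl
  | tail _ h ih => exact Relation.ReflTransGen.tail ih (hf _ _ h)
theorem steps_trans {a b c : Term} (h : Steps a b) (h' : Steps b c) : Steps a c :=
  Relation.ReflTransGen.trans h h'
theorem steps_nf (t : Term) : Steps t (nf t) := by
  induction t with
  | var n => exact .refl
  | projL t ih => exact steps_trans (lift Term.projL (fun _ _ => Step.congL) ih) (pl_steps _)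
  | projR t ih => exact steps_trans (lift Term.projR (fun _ _ => Step.congR) ih) (pr_steps _)
  | join a b iha ihb =>
    exact steps_trans (steps_trans
      (lift (fun x => Term.join x b) (fun _ _ => Step.congJoinL b) iha)
      (lift (fun x => Term.join (nf a) x) (fun _ _ => Step.congJoinR (nf a)) ihb)) (mj_steps _ _)
end NA

/-- The rewrite relation of the name algebra is confluent. -/
theorem step_confluent :
    ∀ a b c : Term, Steps a b → Steps a c → ∃ d, Steps b d ∧ Steps c d := by
  intro a b c hb hc
  refine ⟨NA.nf a, ?_, ?_⟩
  · rw [NA.nf_steps hb]; exact NA.steps_nf b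
  · rw [NA.nf_steps hc]; exact NA.steps_nf c
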